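/- Let ρ_ABC be a positive definite density matrix on the tensor product of finite-dimensional complex Hilbert spaces H_A ⊗ H_B ⊗ H_C. Then I_max(A;B|C)_ρ = 0 if and only if ρ_ABC is a short quantum Markov chain A−C−B, and I_min(A;B|C)_ρ = 0 if and only if ρ_ABC is a short quantum Markov chain A−C−B. -/

import Mathlib

open scoped ComplexOrder Matrix

/-- Real power of a Hermitian matrix, taken on its support:
for `A = ∑ᵢ λᵢ |i⟩⟨i|`, `mpow A t = ∑_{i : λᵢ ≠ 0} λᵢ^t |i⟩⟨i|`.
(For non-Hermitian input we return the junk value `0`.) -/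
noncomputable def mpow {n : Type*} [Fintype n] [DecidableEq n]
    (A : Matrix n n ℂ) (t : ℝ) : Matrix n n ℂ :=
  if h : A.IsHermitian then
    (h.eigenvectorUnitary : Matrix n n ℂ) *
      Matrix.diagonal (fun i => ((if h.eigenvalues i = 0 then (0:ℝ)
        else (h.eigenvalues i) ^ t) : ℂ)) *
      (star h.eigenvectorUnitary : Matrix n n ℂ)
  else 0

/-- The reduced matrix `ρ_AC` of a tripartite matrix, viewed as the operator
`ρ_AC ⊗ I_B` on the full space. -/
noncomputable def redAC {dA dB dC : ℕ}
    (ρ : Matrix (Fin dA × Fin dB × Fin dC) (Fin dA × Fin dB × Fin dC) ℂ) :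
    Matrix (Fin dA × Fin dB × Fin dC) (Fin dA × Fin dB × Fin dC) ℂ :=
  fun x y => (if x.2.1 = y.2.1 then (1:ℂ) else 0) *
    ∑ m : Fin dB, ρ (x.1, m, x.2.2) (y.1, m, y.2.2)

/-- The reduced matrix `ρ_BC` of a tripartite matrix, viewed as the operator
`I_A ⊗ ρ_BC` on the full space. -/
noncomputable def redBC {dA dB dC : ℕ}
    (ρ : Matrix (Fin dA × Fin dB × Fin dC) (Fin dA × Fin dB × Fin dC) ℂ) :
    Matrix (Fin dA × Fin dB × Fin dC) (Fin dA × Fin dB × Fin dC) ℂ :=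
  fun x y => (if x.1 = y.1 then (1:ℂ) else 0) * ∑ m : Fin dA, ρ (m, x.2) (m, y.2)

/-- The reduced matrix `ρ_C` of a tripartite matrix, viewed as the operator
`I_A ⊗ I_B ⊗ ρ_C` on the full space. -/
noncomputable def redC {dA dB dC : ℕ}
    (ρ : Matrix (Fin dA × Fin dB × Fin dC) (Fin dA × Fin dB × Fin dC) ℂ) :
    Matrix (Fin dA × Fin dB × Fin dC) (Fin dA × Fin dB × Fin dC) ℂ :=
  fun x y => (if x.1 = y.1 then (1:ℂ) else 0) * (if x.2.1 = y.2.1 then (1:ℂ) else 0) *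
    ∑ m : Fin dA, ∑ l : Fin dB, ρ (m, l, x.2.2) (m, l, y.2.2)

/-- Fidelity `F(ρ,σ) = (Tr{|√ρ √σ|})²`, where `|X| = √(X†X)`. -/
noncomputable def fidelity {n : Type*} [Fintype n] [DecidableEq n]
    (ρ σ : Matrix n n ℂ) : ℝ :=
  ((mpow ((mpow ρ (1/2) * mpow σ (1/2))ᴴ * (mpow ρ (1/2) * mpow σ (1/2))) (1/2)).trace.re) ^ 2

/-- The min-relative entropy `D_min(ρ‖σ) = −log F(ρ,σ)`. -/
noncomputable def Dmin {n : Type*} [Fintype n] [DecidableEq n]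
    (ρ σ : Matrix n n ℂ) : ℝ :=
  - Real.log (fidelity ρ σ)

/-- The max-relative entropy `D_max(ρ‖σ) = inf{λ : ρ ≤ 2^λ σ}` (Loewner order). -/
noncomputable def Dmax {n : Type*} [Fintype n] [DecidableEq n]
    (ρ σ : Matrix n n ℂ) : ℝ :=
  sInf {lam : ℝ | (((2:ℝ) ^ lam) • σ - ρ).PosSemidef}

/-- The max-conditional mutual information `I_max(A;B|C)_ρ`. -/
noncomputable def Imax {dA dB dC : ℕ}
    (ρ : Matrix (Fin dA × Fin dB × Fin dC) (Fin dA × Fin dB × Fin dC) ℂ) : ℝ :=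
  Dmax ρ (mpow (redAC ρ) (1/2) * mpow (redC ρ) (-(1/2)) * redBC ρ *
    mpow (redC ρ) (-(1/2)) * mpow (redAC ρ) (1/2))

/-- The min-conditional mutual information `I_min(A;B|C)_ρ`. -/
noncomputable def Imin {dA dB dC : ℕ}
    (ρ : Matrix (Fin dA × Fin dB × Fin dC) (Fin dA × Fin dB × Fin dC) ℂ) : ℝ :=
  Dmin ρ (mpow (redAC ρ) (1/2) * mpow (redC ρ) (-(1/2)) * redBC ρ *
    mpow (redC ρ) (-(1/2)) * mpow (redAC ρ) (1/2))

/-- `ρ_ABC` is a short quantum Markov chain `A−C−B` if it is recovered by the Petz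
recovery channel acting on `C` alone:
`ρ_ABC = ρ_AC^{1/2} ρ_C^{−1/2} ρ_BC ρ_C^{−1/2} ρ_AC^{1/2}`. -/
def IsShortMarkov {dA dB dC : ℕ}
    (ρ : Matrix (Fin dA × Fin dB × Fin dC) (Fin dA × Fin dB × Fin dC) ℂ) : Prop :=
  ρ = mpow (redAC ρ) (1/2) * mpow (redC ρ) (-(1/2)) * redBC ρ *
        mpow (redC ρ) (-(1/2)) * mpow (redAC ρ) (1/2)

section helpers
open Matrix
open scoped Kronecker MatrixOrder Matrix.Norms.L2Operator

lemma mpow_form {n : Type*} [Fintype n] [DecidableEq n] {A : Matrix n n ℂ} (hA : A.PosDef) (t : ℝ) :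
    mpow A t = (hA.1.eigenvectorUnitary : Matrix n n ℂ) *
      Matrix.diagonal (fun i => ((hA.1.eigenvalues i ^ t : ℝ) : ℂ)) *
      (star hA.1.eigenvectorUnitary : Matrix n n ℂ) := by
  unfold mpow
  rw [dif_pos hA.1]
  congr 3
  ext i
  have h := hA.eigenvalues_pos i
  rw [if_neg h.ne']
  have h2 := CFC.rpow_algebraMap (A := ℂ) (x := ⟨hA.1.eigenvalues i, h.le⟩) (y := t)
  exact h2

lemma spec_form {n : Type*} [Fintype n] [DecidableEq n] {A : Matrix n n ℂ} (hA : A.PosDef) :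
    A = (hA.1.eigenvectorUnitary : Matrix n n ℂ) *
      Matrix.diagonal (fun i => ((hA.1.eigenvalues i : ℝ) : ℂ)) *
      (star hA.1.eigenvectorUnitary : Matrix n n ℂ) := by
  have := hA.1.spectral_theorem
  rw [Unitary.conjStarAlgAut_apply] at this
  exact this

lemma mpow_posDef {n : Type*} [Fintype n] [DecidableEq n] {A : Matrix n n ℂ} (hA : A.PosDef) (t : ℝ) :
    (mpow A t).PosDef := by
  rw [mpow_form hA]
  have hu : IsUnit (hA.1.eigenvectorUnitary : Matrix n n ℂ) :=
    (Unitary.toUnits hA.1.eigenvectorUnitary).isUnit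
  have := (Matrix.IsUnit.posDef_star_right_conjugate_iff hu
    (x := Matrix.diagonal (fun i => ((hA.1.eigenvalues i ^ t : ℝ) : ℂ)))).2
  apply this
  apply Matrix.PosDef.diagonal
  intro i
  have := Real.rpow_pos_of_pos (hA.eigenvalues_pos i) t
  exact_mod_cast this

lemma mpow_half_sq {n : Type*} [Fintype n] [DecidableEq n] {A : Matrix n n ℂ} (hA : A.PosDef) :
    mpow A (1/2) * mpow A (1/2) = A := by
  have hu : (star hA.1.eigenvectorUnitary : Matrix n n ℂ) * (hA.1.eigenvectorUnitary : Matrix n n ℂ) = 1 := by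
    simp
  conv_rhs => rw [spec_form hA]
  rw [mpow_form hA]
  set U := (hA.1.eigenvectorUnitary : Matrix n n ℂ)
  calc _ = U * diagonal _ * (star U * U) * diagonal _ * star U := by simp only [mul_assoc]; rfl
    _ = _ := by
      rw [hu, mul_one, mul_assoc U, diagonal_mul_diagonal]
      congr 3
      ext i
      rw [← Complex.ofReal_mul, ← Real.rpow_add (hA.eigenvalues_pos i)]
      norm_num

lemma mpow_neg_half {n : Type*} [Fintype n] [DecidableEq n] {A : Matrix n n ℂ} (hA : A.PosDef) :
    mpow A (-(1/2)) * mpow A (-(1/2)) = A⁻¹ := by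
  symm
  apply Matrix.inv_eq_left_inv
  have hu : (star hA.1.eigenvectorUnitary : Matrix n n ℂ) * (hA.1.eigenvectorUnitary : Matrix n n ℂ) = 1 := by
    simp
  conv_lhs => rhs; rw [spec_form hA]
  have hu' : (hA.1.eigenvectorUnitary : Matrix n n ℂ) * (star hA.1.eigenvectorUnitary : Matrix n n ℂ) = 1 := by
    simp
  rw [mpow_form hA]
  set U := (hA.1.eigenvectorUnitary : Matrix n n ℂ)
  calc _ = U * diagonal _ * (star U * U) * diagonal _ * (star U * U) * diagonal _ * star U := by simp only [mul_assoc]; rfl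
    _ = U * 1 * star U := by
      rw [hu, mul_one, mul_one, mul_assoc U, mul_assoc U, diagonal_mul_diagonal, diagonal_mul_diagonal]
      congr 2
      rw [← diagonal_one]
      congr 1
      ext i
      rw [← Complex.ofReal_mul, ← Real.rpow_add (hA.eigenvalues_pos i), ← Complex.ofReal_mul]
      norm_num
      rw [← Complex.ofReal_mul, Real.rpow_neg_one, inv_mul_cancel₀ (hA.eigenvalues_pos i).ne']
      simp
    _ = 1 := by rw [mul_one]; exact hu'

lemma sqrt_uniq {n : Type*} [Fintype n] [DecidableEq n] {P Q : Matrix n n ℂ} (hP : P.PosDef)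
    (hQ : Q.PosDef) (h : P * P = Q * Q) : P = Q := by
  have h1 : CFC.sqrt (P * P) = P := CFC.sqrt_unique rfl (nonneg_iff_posSemidef.2 hP.posSemidef)
  have h2 : CFC.sqrt (Q * Q) = Q := CFC.sqrt_unique rfl (nonneg_iff_posSemidef.2 hQ.posSemidef)
  rw [← h1, ← h2, h]

lemma dom {n : Type*} [Fintype n] [DecidableEq n] {ρ σ : Matrix n n ℂ} (hρ : ρ.PosDef)
    (hσ : σ.PosDef) : ∃ lam : ℝ, (((2:ℝ) ^ lam) • σ - ρ).PosSemidef := by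
  set S := mpow σ (1/2) with hS
  have hSp : S.PosDef := mpow_posDef hσ _
  have hSS : S * S = σ := mpow_half_sq hσ
  have hd : IsUnit S.det := (Matrix.isUnit_iff_isUnit_det S).1 hSp.isUnit
  set H := S⁻¹ * ρ * S⁻¹ with hH
  have hHs : IsSelfAdjoint H := by
    have h2 := hSp.inv.1
    have h3 := hρ.1
    change Hᴴ = H
    rw [hH, conjTranspose_mul, conjTranspose_mul, h2.eq, h3.eq, mul_assoc]
  have hle := IsSelfAdjoint.le_algebraMap_norm_self (a := H) hHs
  set t := ‖H‖ + 1 with ht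
  have htp : 0 < t := by positivity
  have hle2 : H ≤ algebraMap ℝ (Matrix n n ℂ) t := by
    refine hle.trans ?_
    exact algebraMap_mono _ (by simp [ht])
  refine ⟨Real.logb 2 t, ?_⟩
  rw [Real.rpow_logb (by norm_num) (by norm_num) htp]
  rw [Matrix.le_iff] at hle2
  have := hle2.conjTranspose_mul_mul_same S
  rw [hSp.1.eq] at this
  suffices hs : t • σ - ρ = S * ((algebraMap ℝ (Matrix n n ℂ)) t - H) * S by
    rw [hs]; exact this
  rw [mul_sub, sub_mul, Algebra.algebraMap_eq_smul_one, mul_smul_comm, smul_mul_assoc, mul_one, hSS]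
  congr 1
  rw [hH]
  simp only [mul_assoc]
  rw [Matrix.nonsing_inv_mul _ hd, mul_one, Matrix.mul_nonsing_inv_cancel_left _ _ hd]

lemma Dmax_iff {n : Type*} [Fintype n] [DecidableEq n] {ρ σ : Matrix n n ℂ} (hρ : ρ.PosDef)
    (hσ : σ.PosDef) (h1 : ρ.trace = 1) (h2 : σ.trace = 1) : Dmax ρ σ = 0 ↔ ρ = σ := by
  have hnn : ∀ lam : ℝ, (((2:ℝ) ^ lam) • σ - ρ).PosSemidef → 0 ≤ lam := by
    intro lam h
    have := h.trace_nonneg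
    rw [trace_sub, trace_smul, h1, h2] at this
    have h3 : (0:ℂ) ≤ (((2:ℝ)^lam - 1 : ℝ) : ℂ) := by
      convert this using 1
      simp
    have h4 : (0:ℝ) ≤ (2:ℝ)^lam - 1 := by exact_mod_cast h3
    by_contra hl
    push Not at hl
    have := Real.rpow_lt_one_of_one_lt_of_neg (by norm_num : (1:ℝ) < 2) hl
    linarith
  have hbb : BddBelow {lam : ℝ | (((2:ℝ) ^ lam) • σ - ρ).PosSemidef} := ⟨0, fun l hl => hnn l hl⟩
  constructor
  · intro h
    have hcl : IsClosed {lam : ℝ | (((2:ℝ) ^ lam) • σ - ρ).PosSemidef} := by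
      have : {lam : ℝ | (((2:ℝ) ^ lam) • σ - ρ).PosSemidef} =
        (fun lam : ℝ => (((2:ℝ) ^ lam) • σ - ρ)) ⁻¹' {x | 0 ≤ x} := by
        ext l; simp [nonneg_iff_posSemidef]
      rw [this]
      apply IsClosed.preimage
      · have : Continuous (fun lam : ℝ => (2:ℝ)^lam) := Real.continuous_const_rpow (by norm_num)
        fun_prop
      · exact CStarAlgebra.isClosed_nonneg
    have hm := hcl.csInf_mem (dom hρ hσ) hbb
    unfold Dmax at h
    rw [h] at hm
    simp only [Set.mem_ofPred_eq, Real.rpow_zero, one_smul] at hm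
    have ht : (σ - ρ).trace = 0 := by rw [trace_sub, h1, h2, sub_self]
    have := hm.trace_eq_zero_iff.1 ht
    exact (sub_eq_zero.1 this).symm
  · rintro rfl
    apply le_antisymm
    · apply csInf_le hbb
      simp [Matrix.PosSemidef.zero]
    · exact Real.sInf_nonneg hnn

lemma fid_iff {n : Type*} [Fintype n] [DecidableEq n] [Nonempty n] {ρ σ : Matrix n n ℂ} (hρ : ρ.PosDef)
    (hσ : σ.PosDef) (h1 : ρ.trace = 1) (h2 : σ.trace = 1) : Dmin ρ σ = 0 ↔ ρ = σ := by
  unfold Dmin fidelity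
  set P := mpow ρ (1/2) with hP
  set Q := mpow σ (1/2) with hQ
  have hPp : P.PosDef := mpow_posDef hρ _
  have hQp : Q.PosDef := mpow_posDef hσ _
  have hPP : P * P = ρ := mpow_half_sq hρ
  have hQQ : Q * Q = σ := mpow_half_sq hσ
  have hX : (P * Q)ᴴ = Q * P := by rw [conjTranspose_mul, hPp.1.eq, hQp.1.eq]
  have hXp : ((P * Q)ᴴ * (P * Q)).PosDef := by
    have := hρ.conjTranspose_mul_mul_same (B := Q)
      (Matrix.mulVec_injective_iff_isUnit.2 hQp.isUnit)
    convert this using 1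
    rw [hX, hQp.1.eq, ← hPP]; simp only [mul_assoc]
  set T := mpow ((P * Q)ᴴ * (P * Q)) (1/2) with hT
  have hTp : T.PosDef := mpow_posDef hXp _
  have hTT : T * T = (P * Q)ᴴ * (P * Q) := mpow_half_sq hXp
  have htr : 0 < T.trace := hTp.trace_pos
  have htr' : 0 < T.trace.re := (Complex.pos_iff.1 htr).1
  have htim : T.trace.im = 0 := (Complex.pos_iff.1 htr).2.symm
  constructor
  · intro h
    have h3 : T.trace.re = 1 := by
      rw [neg_eq_zero, Real.log_eq_zero] at h
      rcases h with h | h | h <;> nlinarith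
    have h4 : T.trace = 1 := Complex.ext (by simpa using h3) (by simpa using htim)
    have hd : IsUnit T.det := (Matrix.isUnit_iff_isUnit_det T).1 hTp.isUnit
    set U := P * Q * T⁻¹ with hU
    have hUU : Uᴴ * U = 1 := by
      rw [hU, conjTranspose_mul, hTp.inv.1.eq]
      calc T⁻¹ * (P * Q)ᴴ * (P * Q * T⁻¹) = T⁻¹ * ((P * Q)ᴴ * (P * Q)) * T⁻¹ := by simp only [mul_assoc]
        _ = 1 := by rw [← hTT, Matrix.nonsing_inv_mul_cancel_left _ _ hd, Matrix.mul_nonsing_inv _ hd]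
    have hUU' : U * Uᴴ = 1 := mul_eq_one_comm.1 hUU
    have hUT : U * T = P * Q := by rw [hU, mul_assoc, Matrix.nonsing_inv_mul _ hd, mul_one]
    have hUPQ : Uᴴ * (P * Q) = T := by rw [← hUT, ← mul_assoc, hUU, one_mul]
    have hQPU : Q * P * U = T := by
      have := congrArg conjTranspose hUPQ
      rw [conjTranspose_mul, conjTranspose_conjTranspose, hX, hTp.1.eq] at this
      exact this
    have hz : ((P * U - Q)ᴴ * (P * U - Q)).trace = 0 := by
      have : (P * U - Q)ᴴ * (P * U - Q) = Uᴴ * ρ * U - T - T + σ := by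
        rw [conjTranspose_sub, conjTranspose_mul, hPp.1.eq, hQp.1.eq, ← hPP, ← hQQ]
        nth_rewrite 1 [← hUPQ]
        rw [← hQPU]
        noncomm_ring
      rw [this, trace_add, trace_sub, trace_sub, h4, h2, trace_mul_comm, ← mul_assoc, hUU', one_mul, h1]
      norm_num
    have hz2 := trace_conjTranspose_mul_self_eq_zero_iff.1 hz
    have hz3 : P * U = Q := sub_eq_zero.1 hz2
    have hz4 : Uᴴ * P = Q := by
      have := congrArg conjTranspose hz3
      rwa [conjTranspose_mul, hPp.1.eq, hQp.1.eq] at this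
    rw [← hQQ, ← hPP]
    nth_rewrite 1 [← hz3]
    rw [← hz4, mul_assoc, ← mul_assoc U, hUU', one_mul]
  · intro h
    have hTr : T = ρ := by
      apply sqrt_uniq hTp hρ
      rw [hTT, hX]
      have : P = Q := by rw [hP, hQ, h]
      rw [← this, hPP]
    rw [hTr, h1]; simp

/-- Partial trace over the first factor. -/
noncomputable def ptr {a b : Type*} [Fintype a] (τ : Matrix (a × b) (a × b) ℂ) : Matrix b b ℂ :=
  ∑ m : a, τ.submatrix (Prod.mk m) (Prod.mk m)

lemma ptr_posDef {a b : Type*} [Fintype a] [Fintype b] [Nonempty a] {τ : Matrix (a × b) (a × b) ℂ}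
    (h : τ.PosDef) : (ptr τ).PosDef := by
  classical
  apply Matrix.posDef_sum Finset.univ_nonempty
  intro i _
  exact h.submatrix (Prod.mk_right_injective i)

lemma ptr_conj {a b : Type*} [Fintype a] [Fintype b] [DecidableEq a]
    (τ : Matrix (a × b) (a × b) ℂ) (s : Matrix b b ℂ) :
    ptr (((1 : Matrix a a ℂ) ⊗ₖ s) * τ * ((1 : Matrix a a ℂ) ⊗ₖ s)) = s * ptr τ * s := by
  unfold ptr
  rw [Finset.mul_sum, Finset.sum_mul]
  refine Finset.sum_congr rfl fun m _ => ?_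
  ext x y
  simp [Matrix.mul_apply, Fintype.sum_prod_type, Matrix.one_apply, ite_mul, Finset.sum_ite_eq]

lemma redBC_eq {dA dB dC : ℕ}
    (ρ : Matrix (Fin dA × Fin dB × Fin dC) (Fin dA × Fin dB × Fin dC) ℂ) :
    redBC ρ = (1 : Matrix (Fin dA) (Fin dA) ℂ) ⊗ₖ ptr ρ := by
  ext x y
  simp [redBC, ptr, Matrix.sum_apply, Matrix.one_apply]

lemma redC_eq {dA dB dC : ℕ}
    (ρ : Matrix (Fin dA × Fin dB × Fin dC) (Fin dA × Fin dB × Fin dC) ℂ) :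
    redC ρ = (1 : Matrix (Fin dA) (Fin dA) ℂ) ⊗ₖ ((1 : Matrix (Fin dB) (Fin dB) ℂ) ⊗ₖ ptr (ptr ρ)) := by
  ext x y
  simp only [redC, ptr, Matrix.sum_apply, Matrix.one_apply, kroneckerMap_apply, submatrix_apply]
  rw [Finset.sum_comm, mul_assoc]

lemma redAC_posDef {dA dB dC : ℕ} [Nonempty (Fin dB)]
    {ρ : Matrix (Fin dA × Fin dB × Fin dC) (Fin dA × Fin dB × Fin dC) ℂ} (h : ρ.PosDef) :
    (redAC ρ).PosDef := by
  let e : Fin dA × Fin dB × Fin dC → Fin dB × Fin dA × Fin dC := fun x => (x.2.1, x.1, x.2.2)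
  let f : Fin dB × Fin dA × Fin dC → Fin dA × Fin dB × Fin dC := fun x => (x.2.1, x.1, x.2.2)
  have he : Function.Injective e := by
    rintro ⟨a, b, c⟩ ⟨a', b', c'⟩ h; simp [e] at h ⊢; tauto
  have hf : Function.Injective f := by
    rintro ⟨a, b, c⟩ ⟨a', b', c'⟩ h; simp [f] at h ⊢; tauto
  have h1 := (Matrix.PosDef.one (n := Fin dB) (R := ℂ)).kronecker (ptr_posDef (h.submatrix hf))
  have h2 := h1.submatrix he
  have h3 : redAC ρ = ((1 : Matrix (Fin dB) (Fin dB) ℂ) ⊗ₖ ptr (ρ.submatrix f f)).submatrix e e := by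
    ext x y
    simp [redAC, ptr, Matrix.sum_apply, Matrix.one_apply, e, f]
  rw [h3]
  exact h2

lemma trace_id {dA dB dC : ℕ}
    (ρ τ : Matrix (Fin dA × Fin dB × Fin dC) (Fin dA × Fin dB × Fin dC) ℂ) :
    (redAC ρ * redBC τ).trace = (ρ * redC τ).trace := by
  simp only [trace, diag_apply, mul_apply, Fintype.sum_prod_type, redAC, redBC, redC]
  simp only [ite_mul, one_mul, zero_mul, mul_ite, mul_zero, Finset.sum_ite_eq, Finset.sum_ite_eq',
    Finset.mem_univ, if_true, Finset.sum_ite_irrel, Finset.sum_const_zero, Finset.mul_sum, Finset.sum_mul]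
  refine Finset.sum_congr rfl fun x _ => ?_
  have mv : ∀ g : Fin dB → Fin dC → Fin dC → Fin dA → ℂ,
      ∑ b, ∑ c, ∑ c', ∑ m, g b c c' m = ∑ c, ∑ c', ∑ m, ∑ b, g b c c' m := by
    intro g
    rw [Finset.sum_comm]
    refine Finset.sum_congr rfl fun c _ => ?_
    rw [Finset.sum_comm]
    refine Finset.sum_congr rfl fun c' _ => ?_
    rw [Finset.sum_comm]
  rw [mv, mv]
  refine Finset.sum_congr rfl fun c _ => ?_
  refine Finset.sum_congr rfl fun c' _ => ?_
  refine Finset.sum_congr rfl fun m _ => ?_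
  rw [Finset.sum_comm]


lemma sigma_facts {dA dB dC : ℕ} [Nonempty (Fin dA)] [Nonempty (Fin dB)]
    {ρ : Matrix (Fin dA × Fin dB × Fin dC) (Fin dA × Fin dB × Fin dC) ℂ} (hρ : ρ.PosDef)
    (hρ1 : ρ.trace = 1) :
    (mpow (redAC ρ) (1/2) * mpow (redC ρ) (-(1/2)) * redBC ρ *
      mpow (redC ρ) (-(1/2)) * mpow (redAC ρ) (1/2)).PosDef ∧
    (mpow (redAC ρ) (1/2) * mpow (redC ρ) (-(1/2)) * redBC ρ *
      mpow (redC ρ) (-(1/2)) * mpow (redAC ρ) (1/2)).trace = 1 := by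
  have hAC := redAC_posDef hρ
  have hBCs : (ptr ρ).PosDef := ptr_posDef hρ
  have hCs : (ptr (ptr ρ)).PosDef := ptr_posDef hBCs
  have hBC : (redBC ρ).PosDef := by
    rw [redBC_eq]; exact (Matrix.PosDef.one (n := Fin dA) (R := ℂ)).kronecker hBCs
  have hC : (redC ρ).PosDef := by
    rw [redC_eq]
    exact (Matrix.PosDef.one (n := Fin dA) (R := ℂ)).kronecker
      ((Matrix.PosDef.one (n := Fin dB) (R := ℂ)).kronecker hCs)
  set r := mpow (ptr (ptr ρ)) (-(1/2)) with hr
  have hrp : r.PosDef := mpow_posDef hCs _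
  have hrr : r * r = (ptr (ptr ρ))⁻¹ := mpow_neg_half hCs
  have hdC : IsUnit (ptr (ptr ρ)).det := (Matrix.isUnit_iff_isUnit_det _).1 hCs.isUnit
  have hR : mpow (redC ρ) (-(1/2)) =
      (1 : Matrix (Fin dA) (Fin dA) ℂ) ⊗ₖ ((1 : Matrix (Fin dB) (Fin dB) ℂ) ⊗ₖ r) := by
    apply sqrt_uniq (mpow_posDef hC _)
    · exact (Matrix.PosDef.one (n := Fin dA) (R := ℂ)).kronecker
        ((Matrix.PosDef.one (n := Fin dB) (R := ℂ)).kronecker hrp)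
    · rw [mpow_neg_half hC]
      apply Matrix.inv_eq_left_inv
      rw [redC_eq, ← mul_kronecker_mul, ← mul_kronecker_mul, ← mul_kronecker_mul,
        ← mul_kronecker_mul, hrr, Matrix.nonsing_inv_mul _ hdC]
      simp
  have hRp : (mpow (redC ρ) (-(1/2))).PosDef := mpow_posDef hC _
  have hAp : (mpow (redAC ρ) (1/2)).PosDef := mpow_posDef hAC _
  have hAA := mpow_half_sq hAC
  set R := mpow (redC ρ) (-(1/2))
  set S := mpow (redAC ρ) (1/2)
  constructor
  · have := hBC.conjTranspose_mul_mul_same (B := R * S)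
      (Matrix.mulVec_injective_iff_isUnit.2 (hRp.isUnit.mul hAp.isUnit))
    rw [conjTranspose_mul, hRp.1.eq, hAp.1.eq] at this
    simpa only [mul_assoc] using this
  · rw [trace_mul_comm]
    have e1 : S * (S * R * redBC ρ * R) = redAC ρ * (R * redBC ρ * R) := by
      rw [← hAA]; simp only [mul_assoc]
    have e2 : R * redBC ρ * R = redBC (R * ρ * R) := by
      rw [redBC_eq, redBC_eq, hR, ptr_conj, ← mul_kronecker_mul, ← mul_kronecker_mul]
      simp
    have hrcr : r * ptr (ptr ρ) * r = 1 := by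
      rw [mul_assoc]
      apply mul_eq_one_comm.1
      rw [mul_assoc, hrr, Matrix.mul_nonsing_inv _ hdC]
    have e3 : redC (R * ρ * R) = 1 := by
      rw [redC_eq, hR, ptr_conj, ptr_conj, hrcr]
      simp
    rw [e1, e2, trace_id, e3, mul_one, hρ1]

end helpers

theorem stmt_18 {dA dB dC : ℕ}
    (ρ : Matrix (Fin dA × Fin dB × Fin dC) (Fin dA × Fin dB × Fin dC) ℂ)
    (hρ : ρ.PosDef) (hρ1 : ρ.trace = 1) :
    (Imax ρ = 0 ↔ IsShortMarkov ρ) ∧ (Imin ρ = 0 ↔ IsShortMarkov ρ) := by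
  have hne : Nonempty (Fin dA × Fin dB × Fin dC) := by
    by_contra hc
    rw [not_nonempty_iff] at hc
    simp [Matrix.trace] at hρ1
  obtain ⟨a, b, c⟩ := hne
  have : Nonempty (Fin dA) := ⟨a⟩
  have : Nonempty (Fin dB) := ⟨b⟩
  have : Nonempty (Fin dA × Fin dB × Fin dC) := ⟨(a, b, c)⟩
  obtain ⟨h1, h2⟩ := sigma_facts hρ hρ1
  exact ⟨Dmax_iff hρ h1 hρ1 h2, fid_iff hρ h1 hρ1 h2⟩
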